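/- arXiv:2505.13189 — 2 statements merged into one kernel-verified Lean document; each statement's English description precedes it below -/
import Mathlib

section
/- Let X₀ ~ μ and Z ~ γ be independent random vectors, where μ is a probability measure on ℝᵈ with μ ≪ γ and ∫‖x‖ dμ(x) < ∞. Fix t > 0 and set X_t := e^{-t/2} X₀ + √(1 - e^{-t}) Z, and let μ_t denote the law of X_t. Then μ_t ≪ γ, its density ρ_t := dμ_t/dγ is everywhere strictly positive and continuously differentiable, and for μ_t-almost every x ∈ ℝᵈ the conditional expectation satisfies E[X₀ | X_t = x] = e^{-t/2} x + (e^{t/2} - e^{-t/2}) · C ∇ log ρ_t(x). (This is the finite-dimensional case ℍ = ℝᵈ of the paper's Theorem 1: the Γ-score of the Ornstein–Uhlenbeck forward process equals a conditional expectation.) -/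
open MeasureTheory Real
open scoped ENNReal RealInnerProductSpace

/-- Reinterpret a plain vector `Fin k → ℝ` as an element of `EuclideanSpace ℝ (Fin k)`. -/
def toEuc {k : ℕ} (v : Fin k → ℝ) : EuclideanSpace ℝ (Fin k) := WithLp.toLp 2 v

/-- Reinterpret an element of `EuclideanSpace ℝ (Fin k)` as a plain vector `Fin k → ℝ`. -/
def fromEuc {k : ℕ} (v : EuclideanSpace ℝ (Fin k)) : Fin k → ℝ := v

/-- The centered Gaussian measure `N(0, C)` on `ℝᵈ` (realized as `EuclideanSpace ℝ (Fin k)`),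
with covariance matrix `C`, defined via its density with respect to Lebesgue measure. -/
noncomputable def gaussianM {k : ℕ} (C : Matrix (Fin k) (Fin k) ℝ) :
    Measure (EuclideanSpace ℝ (Fin k)) :=
  MeasureTheory.volume.withDensity fun x =>
    ENNReal.ofReal ((2 * π) ^ (-(k : ℝ) / 2) * C.det ^ (-(1 : ℝ) / 2) *
      Real.exp (-(⟪x, toEuc (Matrix.mulVec C⁻¹ x)⟫) / 2))

instance {k : ℕ} (C : Matrix (Fin k) (Fin k) ℝ) : SFinite (gaussianM C) := by
  unfold gaussianM; infer_instance

/-- The forward Ornstein–Uhlenbeck noising map at time `t`: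
`(x, z) ↦ e^{-t/2} x + √(1 - e^{-t}) z`, so that `X_t = ouMap t (X₀, Z)`. -/
noncomputable def ouMap {k : ℕ} (t : ℝ)
    (p : EuclideanSpace ℝ (Fin k) × EuclideanSpace ℝ (Fin k)) :
    EuclideanSpace ℝ (Fin k) :=
  Real.exp (-t / 2) • p.1 + Real.sqrt (1 - Real.exp (-t)) • p.2

/-!
Since `a ^ 2 + s ^ 2 = 1` for `a = e^{-t/2}` and `s = √(1 - e^{-t})`, the transition density of the
forward process with respect to `γ = N(0, C)` (the Mehler kernel) factorises, with `Λ = C⁻¹`, as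
`k(x, y) = s⁻ᵈ w(y) exp ⟪x, (a / s²) Λ y⟫ w(x)` with the Gaussian weight
`w(x) = exp (-(a² / 2s²) ⟪x, Λ x⟫)`. Hence `ρ` is, up to the factor `s⁻ᵈ w`, the Laplace transform
of the measure `w μ` evaluated at `(a / s²) Λ y`. This transform is smooth, and its logarithmic
gradient is the mean of the measure `exp ⟪x, (a / s²) Λ y⟫ w(x) μ(dx)` after normalisation, which by
Bayes' formula is the posterior law of `X₀` given `X_t = y`. So
`∇ log ρ(y) = (a / s²) Λ (E[X₀ | X_t = y] - a y)`, and solving for the conditional expectation gives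
the claim, with coefficient `s² / a = e^{t/2} - e^{-t/2}`.
-/

section BayesFormula

variable {Ω α β δ F : Type*} {mΩ : MeasurableSpace Ω} {mα : MeasurableSpace α}
  {mβ : MeasurableSpace β} {mδ : MeasurableSpace δ} [NormedAddCommGroup F] [NormedSpace ℝ F]
  {P : Measure Ω} {X : Ω → α} {Y : Ω → β} {μ : Measure α} {ν : Measure β} {ν' : Measure δ}
  {k : α → β → ℝ} {f : α → F}

/-- Under `P` the pair `(X, Y)` has density `k` with respect to the product measure `μ.prod ν`. -/
structure HasJointDensity (P : Measure Ω) (X : Ω → α) (Y : Ω → β) (μ : Measure α) (ν : Measure β)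
    (k : α → β → ℝ) : Prop where
  measurable_left : Measurable X
  measurable_right : Measurable Y
  measurable_density : Measurable k.uncurry
  nonneg : ∀ x y, 0 ≤ k x y
  map_prodMk : P.map (fun ω => (X ω, Y ω)) =
    (μ.prod ν).withDensity fun p => ENNReal.ofReal (k p.1 p.2)

/-- The mean of `f` under the posterior law of the first coordinate given the value `y` of the
second one, for a pair whose joint density with respect to `μ.prod ν` is `k`. It is `0` where the
marginal density `∫ x, k x y ∂μ` vanishes. -/
noncomputable def posteriorMean (μ : Measure α) (k : α → β → ℝ) (f : α → F) (y : β) : F :=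
  (∫ x, k x y ∂μ)⁻¹ • ∫ x, k x y • f x ∂μ

theorem integral_smul_posteriorMean {y : β} (hk : ∀ x, 0 ≤ k x y) (hky : Integrable (k · y) μ) :
    (∫ x, k x y ∂μ) • posteriorMean μ k f y = ∫ x, k x y • f x ∂μ := by
  by_cases h_zero : ∫ x, k x y ∂μ = 0
  · have hk_ae : (k · y) =ᵐ[μ] 0 := (integral_eq_zero_iff_of_nonneg hk hky).mp h_zero
    rw [h_zero, zero_smul, integral_eq_zero_of_ae]
    filter_upwards [hk_ae] with x hx
    simp only [hx, Pi.zero_apply, zero_smul]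
  · exact smul_inv_smul₀ h_zero _

theorem stronglyMeasurable_posteriorMean [SFinite μ] (hk : Measurable k.uncurry)
    (hf : StronglyMeasurable f) : StronglyMeasurable (posteriorMean μ k f) :=
  (hk.stronglyMeasurable.integral_prod_left' (μ := μ)).measurable.inv.stronglyMeasurable.smul
    ((hk.stronglyMeasurable.smul (hf.comp_measurable measurable_fst)).integral_prod_left' (μ := μ))

theorem map_prodMk_prod_eq_withDensity [SFinite ν] [SFinite ν'] {φ : α → β → δ}
    (hφ : Measurable φ.uncurry) {κ : α → δ → ℝ≥0∞} (hκ : Measurable κ.uncurry)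
    (hmap : ∀ x, ν.map (φ x) = ν'.withDensity (κ x)) :
    (μ.prod ν).map (fun p => (p.1, φ p.1 p.2)) = (μ.prod ν').withDensity κ.uncurry := by
  have hφ' : Measurable fun p : α × β => φ p.1 p.2 := hφ
  refine Measure.ext_of_lintegral _ fun g hg => ?_
  have hslice : ∀ x, ∫⁻ z, g (x, φ x z) ∂ν = ∫⁻ y, κ x y * g (x, y) ∂ν' := fun x =>
    calc ∫⁻ z, g (x, φ x z) ∂ν = ∫⁻ y, g (x, y) ∂ν.map (φ x) :=
          (lintegral_map (f := fun y => g (x, y)) (by fun_prop) hφ.of_uncurry_left).symm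
      _ = ∫⁻ y, κ x y * g (x, y) ∂ν' := by
          rw [hmap, lintegral_withDensity_eq_lintegral_mul _ hκ.of_uncurry_left (by fun_prop)]
          rfl
  calc ∫⁻ q, g q ∂(μ.prod ν).map (fun p => (p.1, φ p.1 p.2))
      = ∫⁻ x, ∫⁻ z, g (x, φ x z) ∂ν ∂μ := by
        rw [lintegral_map hg (by fun_prop), lintegral_prod _ (by fun_prop)]
    _ = ∫⁻ x, ∫⁻ y, κ x y * g (x, y) ∂ν' ∂μ := lintegral_congr hslice
    _ = ∫⁻ q, g q ∂(μ.prod ν').withDensity κ.uncurry := by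
        rw [lintegral_withDensity_eq_lintegral_mul _ hκ hg, lintegral_prod _ (by fun_prop)]
        rfl

namespace HasJointDensity

variable (h : HasJointDensity P X Y μ ν k)

include h

theorem integrable_smul (hf : StronglyMeasurable f) (hfX : Integrable (fun ω => f (X ω)) P) :
    Integrable (fun p : α × β => k p.1 p.2 • f p.1) (μ.prod ν) := by
  have hlaw : Integrable (fun p : α × β => f p.1) (P.map fun ω => (X ω, Y ω)) :=
    (integrable_map_measure (hf.comp_measurable measurable_fst).aestronglyMeasurable
      (h.measurable_left.prodMk h.measurable_right).aemeasurable).mpr hfX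
  rw [h.map_prodMk, integrable_withDensity_iff_integrable_smul'
    (by exact h.measurable_density.ennreal_ofReal)
    (Filter.Eventually.of_forall fun _ => ENNReal.ofReal_lt_top)] at hlaw
  simpa only [ENNReal.toReal_ofReal (h.nonneg _ _)] using hlaw

theorem integrable [IsFiniteMeasure P] :
    Integrable (fun p : α × β => k p.1 p.2) (μ.prod ν) := by
  simpa only [smul_eq_mul, mul_one] using
    h.integrable_smul (f := fun _ => (1 : ℝ)) stronglyMeasurable_const (integrable_const _)

variable [SFinite μ]

theorem measurable_marginal : Measurable fun y => ENNReal.ofReal (∫ x, k x y ∂μ) :=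
  (h.measurable_density.stronglyMeasurable.integral_prod_left' (μ := μ)).measurable.ennreal_ofReal

variable [SFinite ν]

theorem setIntegral_preimage (hf : StronglyMeasurable f) (hfX : Integrable (fun ω => f (X ω)) P)
    {B : Set β} (hB : MeasurableSet B) :
    ∫ ω in Y ⁻¹' B, f (X ω) ∂P = ∫ y in B, ∫ x, k x y • f x ∂μ ∂ν := by
  have hint : Integrable (fun p : α × β => k p.1 p.2 • f p.1) (μ.prod (ν.restrict B)) := by
    have := (h.integrable_smul hf hfX).integrableOn (s := Set.univ ×ˢ B)
    rwa [IntegrableOn, ← Measure.prod_restrict, Measure.restrict_univ] at this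
  have hf_fst : StronglyMeasurable fun p : α × β => f p.1 := hf.comp_measurable measurable_fst
  have hB_strip : MeasurableSet ((Set.univ : Set α) ×ˢ B) := MeasurableSet.univ.prod hB
  calc ∫ ω in Y ⁻¹' B, f (X ω) ∂P
      = ∫ p in Set.univ ×ˢ B, f p.1 ∂P.map fun ω => (X ω, Y ω) := by
        rw [setIntegral_map hB_strip hf_fst.aestronglyMeasurable
          (h.measurable_left.prodMk h.measurable_right).aemeasurable, Set.mk_preimage_prod,
          Set.preimage_univ, Set.univ_inter]
    _ = ∫ p in Set.univ ×ˢ B, k p.1 p.2 • f p.1 ∂μ.prod ν := by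
        rw [h.map_prodMk, setIntegral_withDensity_eq_setIntegral_toReal_smul
          (by exact h.measurable_density.ennreal_ofReal)
          (Filter.Eventually.of_forall fun _ => ENNReal.ofReal_lt_top) _ hB_strip]
        simp only [ENNReal.toReal_ofReal (h.nonneg _ _)]
    _ = ∫ y in B, ∫ x, k x y • f x ∂μ ∂ν := by
        rw [← Measure.prod_restrict, Measure.restrict_univ, integral_prod_symm _ hint]

variable [IsFiniteMeasure P]

theorem map_right_eq_withDensity :
    P.map Y = ν.withDensity fun y => ENNReal.ofReal (∫ x, k x y ∂μ) := by
  have hk : Measurable fun p : α × β => ENNReal.ofReal (k p.1 p.2) :=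
    h.measurable_density.ennreal_ofReal
  have hY_snd : P.map Y = (P.map fun ω => (X ω, Y ω)).map Prod.snd :=
    (Measure.map_map measurable_snd (h.measurable_left.prodMk h.measurable_right)).symm
  ext B hB
  rw [hY_snd, h.map_prodMk, Measure.map_apply measurable_snd hB,
    withDensity_apply _ (measurable_snd hB), withDensity_apply _ hB, ← Set.univ_prod,
    ← Measure.prod_restrict, Measure.restrict_univ, lintegral_prod_symm _ hk.aemeasurable]
  refine lintegral_congr_ae (ae_restrict_of_ae ?_)
  filter_upwards [h.integrable.prod_left_ae] with y hy
  exact (ofReal_integral_eq_lintegral_ofReal hy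
    (Filter.Eventually.of_forall fun x => h.nonneg x y)).symm

theorem marginal_smul_posteriorMean_ae_eq :
    (fun y => (ENNReal.ofReal (∫ x, k x y ∂μ)).toReal • posteriorMean μ k f y) =ᵐ[ν]
      fun y => ∫ x, k x y • f x ∂μ := by
  filter_upwards [h.integrable.prod_left_ae] with y hy
  rw [ENNReal.toReal_ofReal (integral_nonneg (h.nonneg · y)),
    integral_smul_posteriorMean (h.nonneg · y) hy]

theorem integrable_posteriorMean_comp (hf : StronglyMeasurable f)
    (hfX : Integrable (fun ω => f (X ω)) P) :
    Integrable (fun ω => posteriorMean μ k f (Y ω)) P := by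
  refine (integrable_map_measure (stronglyMeasurable_posteriorMean h.measurable_density
    hf).aestronglyMeasurable h.measurable_right.aemeasurable).mp ?_
  rw [h.map_right_eq_withDensity, integrable_withDensity_iff_integrable_smul'
    h.measurable_marginal (Filter.Eventually.of_forall fun _ => ENNReal.ofReal_lt_top)]
  exact (h.integrable_smul hf hfX).integral_prod_right.congr
    h.marginal_smul_posteriorMean_ae_eq.symm

theorem setIntegral_preimage_posteriorMean (hf : StronglyMeasurable f) {B : Set β}
    (hB : MeasurableSet B) :
    ∫ ω in Y ⁻¹' B, posteriorMean μ k f (Y ω) ∂P = ∫ y in B, ∫ x, k x y • f x ∂μ ∂ν := by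
  rw [← setIntegral_map hB (stronglyMeasurable_posteriorMean h.measurable_density
      hf).aestronglyMeasurable h.measurable_right.aemeasurable, h.map_right_eq_withDensity,
    setIntegral_withDensity_eq_setIntegral_toReal_smul h.measurable_marginal
      (Filter.Eventually.of_forall fun _ => ENNReal.ofReal_lt_top) _ hB]
  exact integral_congr_ae (ae_restrict_of_ae h.marginal_smul_posteriorMean_ae_eq)

theorem condExp_ae_eq_posteriorMean [CompleteSpace F] (hf : StronglyMeasurable f)
    (hfX : Integrable (fun ω => f (X ω)) P) :
    P[fun ω => f (X ω) | mβ.comap Y] =ᵐ[P] fun ω => posteriorMean μ k f (Y ω) := by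
  symm
  refine ae_eq_condExp_of_forall_setIntegral_eq h.measurable_right.comap_le hfX
    (fun _ _ _ => (h.integrable_posteriorMean_comp hf hfX).integrableOn) ?_
    ((stronglyMeasurable_posteriorMean h.measurable_density hf).comp_measurable
      (comap_measurable Y)).aestronglyMeasurable
  rintro _ ⟨B, hB, rfl⟩ -
  rw [h.setIntegral_preimage_posteriorMean hf hB, h.setIntegral_preimage hf hfX hB]

end HasJointDensity

end BayesFormula

section LaplaceTransform

open scoped ContDiff

variable {E : Type*} [NormedAddCommGroup E] [MeasurableSpace E] {μ : Measure E} {f : E → ℝ}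

/-- Exponential moments of every order for the signed measure with density `f` with respect to
`μ`: the condition under which its Laplace transform is defined and smooth everywhere. -/
def HasExpMoments (μ : Measure E) (f : E → ℝ) : Prop :=
  ∀ r : ℝ, Integrable (fun x => exp (r * ‖x‖) * f x) μ

theorem HasExpMoments.aestronglyMeasurable (hf : HasExpMoments μ f) :
    AEStronglyMeasurable f μ := by
  simpa only [zero_mul, exp_zero, one_mul] using (hf 0).aestronglyMeasurable

variable [BorelSpace E]

theorem HasExpMoments.norm_self_mul (hf : HasExpMoments μ f) :
    HasExpMoments μ fun x => ‖x‖ * f x := by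
  intro r
  refine (hf (r + 1)).mono
    ((by fun_prop : Measurable fun x : E => exp (r * ‖x‖)).aestronglyMeasurable.mul
      (measurable_norm.aestronglyMeasurable.mul hf.aestronglyMeasurable))
    (Filter.Eventually.of_forall fun x => ?_)
  have hx : ‖x‖ ≤ exp ‖x‖ := (le_add_of_nonneg_right zero_le_one).trans (add_one_le_exp _)
  calc ‖exp (r * ‖x‖) * (‖x‖ * f x)‖ = exp (r * ‖x‖) * ‖x‖ * ‖f x‖ := by
        rw [norm_mul, norm_mul, norm_norm, norm_of_nonneg (exp_pos _).le, mul_assoc]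
    _ ≤ exp (r * ‖x‖) * exp ‖x‖ * ‖f x‖ := by gcongr
    _ = ‖exp ((r + 1) * ‖x‖) * f x‖ := by
        rw [norm_mul, norm_of_nonneg (exp_pos _).le, add_mul, one_mul, exp_add]

theorem hasExpMoments_exp_neg [IsFiniteMeasure μ] {q : E → ℝ} (hq : Measurable q) {c : ℝ}
    (hc : 0 < c) (hqc : ∀ x, c * ‖x‖ ^ 2 ≤ q x) : HasExpMoments μ fun x => exp (-q x) := by
  intro r
  refine (integrable_const (exp (r ^ 2 / (4 * c)))).mono' (by fun_prop)
    (Filter.Eventually.of_forall fun x => ?_)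
  have hsq : r * ‖x‖ - c * ‖x‖ ^ 2 ≤ r ^ 2 / (4 * c) := by
    rw [le_div_iff₀ (by positivity)]
    linarith [sq_nonneg (r - 2 * c * ‖x‖)]
  rw [← exp_add, norm_of_nonneg (exp_pos _).le, exp_le_exp]
  linarith [hqc x]

variable [InnerProductSpace ℝ E]

/-- The two-sided Laplace transform of the signed measure with density `f` with respect to `μ`. -/
noncomputable def laplaceTransform (μ : Measure E) (f : E → ℝ) (v : E) : ℝ :=
  ∫ x, exp ⟪x, v⟫ * f x ∂μ

variable [SecondCountableTopology E]

theorem HasExpMoments.integrable_exp_inner_mul (hf : HasExpMoments μ f) (v : E) :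
    Integrable (fun x => exp ⟪x, v⟫ * f x) μ := by
  refine (hf ‖v‖).mono
    ((by fun_prop : Measurable fun x : E => exp ⟪x, v⟫).aestronglyMeasurable.mul
      hf.aestronglyMeasurable) (Filter.Eventually.of_forall fun x => ?_)
  rw [norm_mul, norm_mul, norm_of_nonneg (exp_pos _).le, norm_of_nonneg (exp_pos _).le]
  gcongr
  exact (real_inner_le_norm x v).trans_eq (mul_comm _ _)

theorem HasExpMoments.inner_mul (hf : HasExpMoments μ f) (w : E) :
    HasExpMoments μ fun x => ⟪x, w⟫ * f x := by
  intro r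
  refine ((hf.norm_self_mul r).const_mul ‖w‖).mono
    ((by fun_prop : Measurable fun x : E => exp (r * ‖x‖)).aestronglyMeasurable.mul
      ((by fun_prop : Measurable fun x : E => ⟪x, w⟫).aestronglyMeasurable.mul
        hf.aestronglyMeasurable))
    (Filter.Eventually.of_forall fun x => ?_)
  calc ‖exp (r * ‖x‖) * (⟪x, w⟫ * f x)‖ = exp (r * ‖x‖) * (‖⟪x, w⟫‖ * ‖f x‖) := by
        rw [norm_mul, norm_mul, norm_of_nonneg (exp_pos _).le]
    _ ≤ exp (r * ‖x‖) * (‖x‖ * ‖w‖ * ‖f x‖) := by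
        gcongr
        exact norm_inner_le_norm x w
    _ = ‖‖w‖ * (exp (r * ‖x‖) * (‖x‖ * f x))‖ := by
        simp only [norm_mul, norm_norm, norm_of_nonneg (exp_pos _).le]
        ring

theorem HasExpMoments.integrable_exp_inner_mul_smul (hf : HasExpMoments μ f) (v : E) :
    Integrable (fun x => (exp ⟪x, v⟫ * f x) • x) μ := by
  refine (hf.norm_self_mul.integrable_exp_inner_mul v).mono
    ((hf.integrable_exp_inner_mul v).aestronglyMeasurable.smul
      aestronglyMeasurable_id) (Filter.Eventually.of_forall fun x => le_of_eq ?_)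
  simp only [norm_smul, norm_mul, norm_norm]
  ring

theorem HasExpMoments.laplaceTransform_pos [NeZero μ] (hf : HasExpMoments μ f)
    (hf_pos : ∀ x, 0 < f x) (v : E) : 0 < laplaceTransform μ f v := by
  have hpos : ∀ x, 0 < exp ⟪x, v⟫ * f x := fun x => mul_pos (exp_pos _) (hf_pos x)
  have hsupp : Function.support (fun x => exp ⟪x, v⟫ * f x) = Set.univ :=
    Set.eq_univ_of_forall fun x => (hpos x).ne'
  rw [laplaceTransform, integral_pos_iff_support_of_nonneg (fun x => (hpos x).le)
    (hf.integrable_exp_inner_mul v), hsupp]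
  exact Measure.measure_univ_pos.mpr (NeZero.ne μ)

variable [CompleteSpace E]

theorem HasExpMoments.hasGradientAt_laplaceTransform (hf : HasExpMoments μ f) (v : E) :
    HasGradientAt (laplaceTransform μ f) (∫ x, (exp ⟪x, v⟫ * f x) • x ∂μ) v := by
  have hbound : ∀ x, ∀ w ∈ Metric.ball v 1, ‖innerSL ℝ ((exp ⟪x, w⟫ * f x) • x)‖ ≤
      ‖exp ((‖v‖ + 1) * ‖x‖) * (‖x‖ * f x)‖ := by
    intro x w hw
    have hwv : ‖w‖ ≤ ‖v‖ + 1 := by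
      linarith [norm_sub_norm_le w v, mem_ball_iff_norm.mp hw]
    calc ‖innerSL ℝ ((exp ⟪x, w⟫ * f x) • x)‖ = exp ⟪x, w⟫ * (‖x‖ * ‖f x‖) := by
          rw [innerSL_apply_norm, norm_smul, norm_mul, norm_of_nonneg (exp_pos _).le]
          ring
      _ ≤ exp ((‖v‖ + 1) * ‖x‖) * (‖x‖ * ‖f x‖) := by
          gcongr
          calc ⟪x, w⟫ ≤ ‖x‖ * ‖w‖ := real_inner_le_norm x w
            _ ≤ (‖v‖ + 1) * ‖x‖ := by rw [mul_comm]; gcongr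
      _ = ‖exp ((‖v‖ + 1) * ‖x‖) * (‖x‖ * f x)‖ := by
          rw [norm_mul, norm_mul, norm_norm, norm_of_nonneg (exp_pos _).le]
  have hderiv : ∀ x w, HasFDerivAt (fun w => exp ⟪x, w⟫ * f x)
      (innerSL ℝ ((exp ⟪x, w⟫ * f x) • x)) w := by
    intro x w
    refine (((innerSL ℝ x).hasFDerivAt (x := w)).exp.mul_const (f x)).congr_fderiv ?_
    ext u
    simp only [_root_.smul_apply, innerSL_apply_apply, smul_eq_mul, real_inner_smul_left]
    ring
  rw [hasGradientAt_iff_hasFDerivAt]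
  have h := hasFDerivAt_integral_of_dominated_of_fderiv_le (𝕜 := ℝ)
    (Metric.ball_mem_nhds v one_pos)
    (Filter.Eventually.of_forall fun w => (hf.integrable_exp_inner_mul w).aestronglyMeasurable)
    (hf.integrable_exp_inner_mul v)
    ((innerSL ℝ).continuous.comp_aestronglyMeasurable
      (hf.integrable_exp_inner_mul_smul v).aestronglyMeasurable)
    (Filter.Eventually.of_forall hbound) (hf.norm_self_mul (‖v‖ + 1)).norm
    (Filter.Eventually.of_forall fun x w _ => hderiv x w)
  rwa [(innerSL ℝ).integral_comp_comm (hf.integrable_exp_inner_mul_smul v)] at h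

theorem HasExpMoments.hasGradientAt_log_laplaceTransform [NeZero μ] (hf : HasExpMoments μ f)
    (hf_pos : ∀ x, 0 < f x) (v : E) :
    HasGradientAt (fun v => log (laplaceTransform μ f v))
      ((laplaceTransform μ f v)⁻¹ • ∫ x, (exp ⟪x, v⟫ * f x) • x ∂μ) v := by
  rw [hasGradientAt_iff_hasFDerivAt, map_smul]
  exact (hf.hasGradientAt_laplaceTransform v).hasFDerivAt.log (hf.laplaceTransform_pos hf_pos v).ne'

theorem HasExpMoments.fderiv_laplaceTransform_apply (hf : HasExpMoments μ f) (v w : E) :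
    fderiv ℝ (laplaceTransform μ f) v w = laplaceTransform μ (fun x => ⟪x, w⟫ * f x) v := by
  rw [(hf.hasGradientAt_laplaceTransform v).fderiv_apply, real_inner_comm,
    ← integral_inner (hf.integrable_exp_inner_mul_smul v)]
  refine integral_congr_ae (Filter.Eventually.of_forall fun x => ?_)
  simp only [real_inner_smul_right, real_inner_comm]
  ring

theorem HasExpMoments.contDiff_laplaceTransform [FiniteDimensional ℝ E]
    (hf : HasExpMoments μ f) : ContDiff ℝ ∞ (laplaceTransform μ f) := by
  rw [contDiff_infty]
  intro n
  induction n generalizing f with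
  | zero =>
    exact contDiff_zero.mpr <| continuous_iff_continuousAt.mpr fun v =>
      (hf.hasGradientAt_laplaceTransform v).continuousAt
  | succ n ih =>
    push_cast
    refine contDiff_succ_iff_fderiv_apply.mpr
      ⟨fun v => (hf.hasGradientAt_laplaceTransform v).differentiableAt, by simp, fun w => ?_⟩
    simp only [hf.fderiv_laplaceTransform_apply]
    exact ih (hf.inner_mul w)

end LaplaceTransform

section CoerciveOperator

variable {E : Type*} [NormedAddCommGroup E] [InnerProductSpace ℝ E] [FiniteDimensional ℝ E]
  {Λ : E →L[ℝ] E}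

theorem exists_pos_forall_mul_norm_sq_le_inner (hΛ : ∀ x, x ≠ 0 → 0 < ⟪x, Λ x⟫) :
    ∃ b > 0, ∀ x, b * ‖x‖ ^ 2 ≤ ⟪x, Λ x⟫ := by
  rcases subsingleton_or_nontrivial E with hE | hE
  · exact ⟨1, one_pos, fun x => by simp [Subsingleton.elim x 0]⟩
  obtain ⟨x₀, hx₀, hmin⟩ := (isCompact_sphere (0 : E) 1).exists_isMinOn
    (NormedSpace.sphere_nonempty.mpr zero_le_one) (f := fun x => ⟪x, Λ x⟫) (by fun_prop)
  refine ⟨⟪x₀, Λ x₀⟫, hΛ x₀ (ne_zero_of_mem_unit_sphere ⟨x₀, hx₀⟩), fun x => ?_⟩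
  rcases eq_or_ne x 0 with rfl | hx
  · simp
  have hnorm : 0 < ‖x‖ := norm_pos_iff.mpr hx
  have hunit : ⟪x₀, Λ x₀⟫ ≤ ⟪‖x‖⁻¹ • x, Λ (‖x‖⁻¹ • x)⟫ :=
    hmin (by simp [norm_smul, hnorm.ne'])
  calc ⟪x₀, Λ x₀⟫ * ‖x‖ ^ 2 ≤ ⟪‖x‖⁻¹ • x, Λ (‖x‖⁻¹ • x)⟫ * ‖x‖ ^ 2 := by gcongr
    _ = ⟪x, Λ x⟫ := by
      rw [map_smul, real_inner_smul_left, real_inner_smul_right]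
      field_simp

end CoerciveOperator

section MehlerKernel

open scoped ContDiff

variable {E : Type*} [NormedAddCommGroup E] [InnerProductSpace ℝ E]

/-- The density with respect to `N(0, Λ⁻¹)` of the law of `a • x + s • Z`, where `Z ~ N(0, Λ⁻¹)`;
see `map_smul_add_smul_gaussianWithPrecision`. -/
noncomputable def mehlerKernel (Λ : E →L[ℝ] E) (a s : ℝ) (x y : E) : ℝ :=
  (s ^ Module.finrank ℝ E)⁻¹ *
    exp (-⟪y - a • x, Λ (y - a • x)⟫ / (2 * s ^ 2) + ⟪y, Λ y⟫ / 2)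

/-- The factor of the Mehler kernel which depends on only one of its two arguments; it is the same
for both, see `mehlerKernel_eq_mul_exp_inner`. -/
noncomputable def mehlerWeight (Λ : E →L[ℝ] E) (a s : ℝ) (x : E) : ℝ :=
  exp (-(a ^ 2 / (2 * s ^ 2) * ⟪x, Λ x⟫))

variable {Λ : E →L[ℝ] E} {a s : ℝ}

theorem continuous_mehlerKernel : Continuous (mehlerKernel Λ a s).uncurry := by
  unfold mehlerKernel Function.uncurry; fun_prop

theorem mehlerKernel_nonneg (hs : 0 ≤ s) (x y : E) : 0 ≤ mehlerKernel Λ a s x y := by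
  unfold mehlerKernel; positivity

theorem mehlerWeight_pos (x : E) : 0 < mehlerWeight Λ a s x := exp_pos _

theorem mehlerKernel_eq_mul_exp_inner (hΛ : (Λ : E →ₗ[ℝ] E).IsSymmetric) (hs : s ≠ 0)
    (has : a ^ 2 + s ^ 2 = 1) (x y : E) :
    mehlerKernel Λ a s x y = (s ^ Module.finrank ℝ E)⁻¹ * mehlerWeight Λ a s y *
      (exp ⟪x, (a / s ^ 2) • Λ y⟫ * mehlerWeight Λ a s x) := by
  have hcross : ⟪y, Λ x⟫ = ⟪x, Λ y⟫ := by rw [real_inner_comm]; exact hΛ x y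
  have hs2 : s ^ 2 = 1 - a ^ 2 := by linarith
  simp only [mehlerKernel, mehlerWeight]
  rw [mul_assoc, ← exp_add, ← exp_add]
  congr 2
  simp only [map_sub, map_smul, inner_sub_left, inner_sub_right, real_inner_smul_left,
    real_inner_smul_right, hcross]
  field_simp
  rw [hs2]
  ring

variable [MeasurableSpace E]

/-- The density, with respect to the Gaussian measure `γ` of precision `Λ`, of the law of
`a • X + s • Z` for independent `X ~ μ` and `Z ~ γ`. -/
noncomputable def mehlerDensity (Λ : E →L[ℝ] E) (a s : ℝ) (μ : Measure E) (y : E) : ℝ :=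
  ∫ x, mehlerKernel Λ a s x y ∂μ

variable {μ : Measure E}

theorem hasExpMoments_mehlerWeight [BorelSpace E] [FiniteDimensional ℝ E] [IsFiniteMeasure μ]
    (hΛ_pos : ∀ x, x ≠ 0 → 0 < ⟪x, Λ x⟫) (ha : a ≠ 0) (hs : s ≠ 0) :
    HasExpMoments μ (mehlerWeight Λ a s) := by
  obtain ⟨b, hb, hbΛ⟩ := exists_pos_forall_mul_norm_sq_le_inner hΛ_pos
  refine hasExpMoments_exp_neg (c := a ^ 2 / (2 * s ^ 2) * b) (by fun_prop) (by positivity)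
    fun x => ?_
  rw [mul_assoc]
  gcongr
  exact hbΛ x

variable (hΛ : (Λ : E →ₗ[ℝ] E).IsSymmetric) (hs : 0 < s) (has : a ^ 2 + s ^ 2 = 1)

include hΛ hs has

theorem mehlerDensity_eq_mul_laplaceTransform (y : E) :
    mehlerDensity Λ a s μ y = (s ^ Module.finrank ℝ E)⁻¹ * mehlerWeight Λ a s y *
      laplaceTransform μ (mehlerWeight Λ a s) ((a / s ^ 2) • Λ y) := by
  simp only [mehlerDensity, mehlerKernel_eq_mul_exp_inner hΛ hs.ne' has, integral_const_mul,
    laplaceTransform]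

theorem posteriorMean_mehlerKernel (y : E) :
    posteriorMean μ (mehlerKernel Λ a s) id y =
      (laplaceTransform μ (mehlerWeight Λ a s) ((a / s ^ 2) • Λ y))⁻¹ •
        ∫ x, (exp ⟪x, (a / s ^ 2) • Λ y⟫ * mehlerWeight Λ a s x) • x ∂μ := by
  have hweight : (s ^ Module.finrank ℝ E)⁻¹ * mehlerWeight Λ a s y ≠ 0 :=
    mul_ne_zero (by positivity) (mehlerWeight_pos y).ne'
  simp only [posteriorMean, mehlerKernel_eq_mul_exp_inner hΛ hs.ne' has, integral_const_mul,
    laplaceTransform, id, mul_smul _ (exp _ * _), integral_smul, mul_inv_rev]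
  rw [mul_smul, ← mul_inv_rev, inv_smul_smul₀ hweight]

variable [BorelSpace E] [FiniteDimensional ℝ E] [IsFiniteMeasure μ]
  (hΛ_pos : ∀ x, x ≠ 0 → 0 < ⟪x, Λ x⟫) (ha : a ≠ 0)

include hΛ_pos ha

theorem contDiff_mehlerDensity : ContDiff ℝ ∞ (mehlerDensity Λ a s μ) := by
  have hL := (hasExpMoments_mehlerWeight (μ := μ) hΛ_pos ha hs.ne').contDiff_laplaceTransform
  have hw : ContDiff ℝ ∞ (mehlerWeight Λ a s) :=
    (contDiff_const.mul (contDiff_id.inner ℝ Λ.contDiff)).neg.exp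
  rw [funext (mehlerDensity_eq_mul_laplaceTransform hΛ hs has)]
  fun_prop

theorem mehlerDensity_pos [NeZero μ] (y : E) : 0 < mehlerDensity Λ a s μ y := by
  have hL := (hasExpMoments_mehlerWeight (μ := μ) hΛ_pos ha hs.ne').laplaceTransform_pos
    mehlerWeight_pos ((a / s ^ 2) • Λ y)
  have hw : 0 < mehlerWeight Λ a s y := mehlerWeight_pos y
  rw [mehlerDensity_eq_mul_laplaceTransform hΛ hs has]
  positivity

theorem log_mehlerDensity [NeZero μ] (y : E) :
    log (mehlerDensity Λ a s μ y) =
      log (s ^ Module.finrank ℝ E)⁻¹ - a ^ 2 / (2 * s ^ 2) * ⟪y, Λ y⟫ +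
        log (laplaceTransform μ (mehlerWeight Λ a s) ((a / s ^ 2) • Λ y)) := by
  have hL := (hasExpMoments_mehlerWeight (μ := μ) hΛ_pos ha hs.ne').laplaceTransform_pos
    mehlerWeight_pos ((a / s ^ 2) • Λ y)
  have hw : 0 < mehlerWeight Λ a s y := mehlerWeight_pos y
  rw [mehlerDensity_eq_mul_laplaceTransform hΛ hs has, log_mul (by positivity) hL.ne',
    log_mul (by positivity) hw.ne', mehlerWeight, log_exp, sub_eq_add_neg]

theorem hasGradientAt_log_mehlerDensity [NeZero μ] (y : E) :
    HasGradientAt (fun y => log (mehlerDensity Λ a s μ y))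
      ((a / s ^ 2) • Λ (posteriorMean μ (mehlerKernel Λ a s) id y - a • y)) y := by
  have hquad := ((hasFDerivAt_id y).inner ℝ Λ.hasFDerivAt).const_mul (a ^ 2 / (2 * s ^ 2))
  have hlaplace := (hasExpMoments_mehlerWeight (μ := μ) hΛ_pos ha
    hs.ne').hasGradientAt_log_laplaceTransform mehlerWeight_pos ((a / s ^ 2) • Λ y)
  rw [← posteriorMean_mehlerKernel hΛ hs has] at hlaplace
  rw [funext (log_mehlerDensity hΛ hs has hΛ_pos ha), hasGradientAt_iff_hasFDerivAt]
  refine ((hquad.const_sub _).add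
    (hlaplace.hasFDerivAt.comp y (Λ.hasFDerivAt.const_smul (a / s ^ 2)))).congr_fderiv ?_
  ext u
  have hself : ∀ z, ⟪z, Λ u⟫ = ⟪Λ z, u⟫ := fun z => (hΛ z u).symm
  simp only [id_eq, ContinuousLinearMap.comp_smul, add_apply, neg_apply, smul_apply, sub_apply,
    ContinuousLinearMap.comp_apply, ContinuousLinearMap.prod_apply, ContinuousLinearMap.id_apply,
    fderivInnerCLM_apply, hself, real_inner_comm u, smul_eq_mul,
    InnerProductSpace.toDual_apply_apply, map_sub, map_smul]
  ring

theorem posteriorMean_mehlerKernel_eq_add_score [NeZero μ] {C : E →L[ℝ] E} (hC : ∀ x, C (Λ x) = x)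
    (y : E) : posteriorMean μ (mehlerKernel Λ a s) id y =
      a • y + (s ^ 2 / a) • C (gradient (fun y => log (mehlerDensity Λ a s μ y)) y) := by
  rw [(hasGradientAt_log_mehlerDensity hΛ hs has hΛ_pos ha y).gradient, map_smul, hC, smul_smul,
    div_mul_div_cancel₀ ha, div_self (by positivity), one_smul, add_sub_cancel]

end MehlerKernel

section Gaussian

variable {E : Type*} [NormedAddCommGroup E] [InnerProductSpace ℝ E] [FiniteDimensional ℝ E]
  [MeasurableSpace E] [BorelSpace E]

theorem map_add_smul_withDensity (ν : Measure E) [ν.IsAddHaarMeasure] {g : E → ℝ≥0∞}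
    (hg : Measurable g) (b : E) {s : ℝ} (hs : s ≠ 0) :
    (ν.withDensity g).map (fun z => b + s • z) = ν.withDensity fun y =>
      ENNReal.ofReal |(s ^ Module.finrank ℝ E)⁻¹| * g (s⁻¹ • (y - b)) := by
  refine Measure.ext_of_lintegral _ fun f hf => ?_
  set F : E → ℝ≥0∞ := fun y => g (s⁻¹ • (y - b)) * f y
  have hF : Measurable F := by fun_prop
  calc ∫⁻ y, f y ∂(ν.withDensity g).map (fun z => b + s • z)
      = ∫⁻ z, F (b + s • z) ∂ν := by
        rw [lintegral_map hf (by fun_prop),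
          lintegral_withDensity_eq_lintegral_mul _ hg (by fun_prop)]
        simp only [F, Pi.mul_apply, add_sub_cancel_left, inv_smul_smul₀ hs]
    _ = ∫⁻ w, F (b + w) ∂ν.map (s • ·) :=
        (lintegral_map (f := fun w => F (b + w)) (by fun_prop) (by fun_prop)).symm
    _ = ENNReal.ofReal |(s ^ Module.finrank ℝ E)⁻¹| * ∫⁻ y, F y ∂ν := by
        rw [Measure.map_addHaar_smul _ hs, lintegral_smul_measure, lintegral_add_left_eq_self,
          smul_eq_mul]
    _ = _ := by
        rw [← lintegral_const_mul _ hF, lintegral_withDensity_eq_lintegral_mul _ (by fun_prop) hf]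
        simp only [F, Pi.mul_apply, mul_assoc]

/-- The Gaussian measure with covariance `Λ⁻¹`, with the normalisation constant `K` left free. -/
noncomputable def gaussianWithPrecision (Λ : E →L[ℝ] E) (K : ℝ) : Measure E :=
  volume.withDensity fun x => ENNReal.ofReal (K * exp (-⟪x, Λ x⟫ / 2))

variable {Λ : E →L[ℝ] E} {K a s : ℝ}

instance : SFinite (gaussianWithPrecision Λ K) := by
  unfold gaussianWithPrecision; infer_instance

theorem isFiniteMeasure_gaussianWithPrecision (hΛ_pos : ∀ x, x ≠ 0 → 0 < ⟪x, Λ x⟫) :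
    IsFiniteMeasure (gaussianWithPrecision Λ K) := by
  obtain ⟨b, hb, hbΛ⟩ := exists_pos_forall_mul_norm_sq_le_inner hΛ_pos
  have hisotropic : Integrable (fun x : E => exp (-(b / 2) * ‖x‖ ^ 2)) := by
    refine (GaussianFourier.integrable_cexp_neg_mul_sq_norm_add (V := E) (b := ((b / 2 : ℝ) : ℂ))
      (by simpa using hb) 0 0).norm.congr (Filter.Eventually.of_forall fun x => ?_)
    simp [Complex.norm_exp, ← Complex.ofReal_pow]
  refine isFiniteMeasure_withDensity_ofReal (Integrable.hasFiniteIntegral (.const_mul ?_ _))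
  refine hisotropic.mono' (by fun_prop) (Filter.Eventually.of_forall fun x => ?_)
  rw [norm_of_nonneg (exp_pos _).le, exp_le_exp]
  linarith [hbΛ x]

theorem map_smul_add_smul_gaussianWithPrecision (hK : 0 ≤ K) (hs : 0 < s) (x : E) :
    (gaussianWithPrecision Λ K).map (fun z => a • x + s • z) =
      (gaussianWithPrecision Λ K).withDensity
        fun y => ENNReal.ofReal (mehlerKernel Λ a s x y) := by
  have hκ : Measurable fun y => ENNReal.ofReal (mehlerKernel Λ a s x y) :=
    continuous_mehlerKernel.measurable.of_uncurry_left.ennreal_ofReal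
  rw [gaussianWithPrecision, map_add_smul_withDensity _ (by fun_prop) _ hs.ne',
    ← withDensity_mul _ (by fun_prop) hκ]
  congr 1 with y
  have hexponent : -⟪s⁻¹ • (y - a • x), Λ (s⁻¹ • (y - a • x))⟫ / 2 = -⟪y, Λ y⟫ / 2 +
      (-⟪y - a • x, Λ (y - a • x)⟫ / (2 * s ^ 2) + ⟪y, Λ y⟫ / 2) := by
    rw [map_smul, real_inner_smul_left, real_inner_smul_right]
    field_simp
    ring
  rw [Pi.mul_apply, ← ENNReal.ofReal_mul (abs_nonneg _), ← ENNReal.ofReal_mul (by positivity),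
    abs_of_pos (by positivity), hexponent, exp_add, mehlerKernel]
  ring_nf

theorem hasJointDensity_smul_add_smul_gaussianWithPrecision (μ : Measure E) (hK : 0 ≤ K)
    (hs : 0 < s) :
    HasJointDensity (μ.prod (gaussianWithPrecision Λ K)) Prod.fst (fun p => a • p.1 + s • p.2)
      μ (gaussianWithPrecision Λ K) (mehlerKernel Λ a s) where
  measurable_left := measurable_fst
  measurable_right := by fun_prop
  measurable_density := continuous_mehlerKernel.measurable
  nonneg := mehlerKernel_nonneg hs.le
  map_prodMk := map_prodMk_prod_eq_withDensity (φ := fun x z => a • x + s • z)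
    (κ := fun x y => ENNReal.ofReal (mehlerKernel Λ a s x y)) (by fun_prop)
    continuous_mehlerKernel.measurable.ennreal_ofReal
    (map_smul_add_smul_gaussianWithPrecision hK hs)

end Gaussian

section OrnsteinUhlenbeck

theorem toEuclideanCLM_nonsing_inv_apply {n : Type*} [Fintype n] [DecidableEq n]
    {C : Matrix n n ℝ} (hC : IsUnit C.det) (x : EuclideanSpace ℝ n) :
    Matrix.toEuclideanCLM (𝕜 := ℝ) C (Matrix.toEuclideanCLM (𝕜 := ℝ) C⁻¹ x) = x := by
  rw [← mul_apply_eq_comp, ← map_mul, Matrix.mul_nonsing_inv _ hC, map_one,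
    one_apply_eq_self]

theorem inner_toEuclideanCLM_pos {n : Type*} [Fintype n] [DecidableEq n] {A : Matrix n n ℝ}
    (hA : A.PosDef) {x : EuclideanSpace ℝ n} (hx : x ≠ 0) :
    0 < ⟪x, Matrix.toEuclideanCLM (𝕜 := ℝ) A x⟫ := by
  rw [Matrix.inner_toEuclideanCLM]
  simpa only [star_trivial] using hA.dotProduct_mulVec_pos ((WithLp.ofLp_eq_zero 2).not.mpr hx)

variable {t : ℝ}

theorem sq_exp_neg_half_add_sq_sqrt (ht : 0 ≤ t) : exp (-t / 2) ^ 2 + √(1 - exp (-t)) ^ 2 = 1 := by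
  have hexp : exp (-t) ≤ 1 := exp_le_one_iff.mpr (neg_nonpos.mpr ht)
  rw [sq_sqrt (sub_nonneg.mpr hexp), ← exp_nat_mul, Nat.cast_ofNat,
    mul_div_cancel₀ (-t) (two_ne_zero' ℝ), add_sub_cancel]

theorem sq_sqrt_div_exp_neg_half (ht : 0 ≤ t) :
    √(1 - exp (-t)) ^ 2 / exp (-t / 2) = exp (t / 2) - exp (-t / 2) := by
  have hinv : exp (t / 2) * exp (-t / 2) = 1 := by
    rw [← exp_add, neg_div, add_neg_cancel, exp_zero]
  rw [div_eq_iff (exp_ne_zero _)]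
  linear_combination sq_exp_neg_half_add_sq_sqrt ht - hinv

theorem gaussianM_eq_gaussianWithPrecision {d : ℕ} (C : Matrix (Fin d) (Fin d) ℝ) :
    gaussianM C = gaussianWithPrecision (Matrix.toEuclideanCLM (𝕜 := ℝ) C⁻¹)
      ((2 * π) ^ (-(d : ℝ) / 2) * C.det ^ (-(1 : ℝ) / 2)) := rfl

theorem isFiniteMeasure_gaussianM {d : ℕ} {C : Matrix (Fin d) (Fin d) ℝ} (hC : C.PosDef) :
    IsFiniteMeasure (gaussianM C) := by
  rw [gaussianM_eq_gaussianWithPrecision]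
  exact isFiniteMeasure_gaussianWithPrecision fun _ => inner_toEuclideanCLM_pos hC.inv

theorem hasJointDensity_ouMap {d : ℕ} {C : Matrix (Fin d) (Fin d) ℝ} (hC : 0 ≤ C.det)
    (μ : Measure (EuclideanSpace ℝ (Fin d))) (ht : 0 < t) :
    HasJointDensity (μ.prod (gaussianM C)) Prod.fst (ouMap t) μ (gaussianM C)
      (mehlerKernel (Matrix.toEuclideanCLM (𝕜 := ℝ) C⁻¹) (exp (-t / 2)) √(1 - exp (-t))) := by
  rw [gaussianM_eq_gaussianWithPrecision]
  exact hasJointDensity_smul_add_smul_gaussianWithPrecision μ (by positivity)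
    (sqrt_pos.mpr (by simpa using ht))

open scoped ContDiff in
theorem gamma_score_eq_condexp_general {d : ℕ} (C : Matrix (Fin d) (Fin d) ℝ) (hC : C.PosDef)
    (μ : Measure (EuclideanSpace ℝ (Fin d))) [IsFiniteMeasure μ] [NeZero μ]
    (hmom : Integrable (fun x : EuclideanSpace ℝ (Fin d) => ‖x‖) μ) (t : ℝ) (ht : 0 < t) :
    ∃ ρ : EuclideanSpace ℝ (Fin d) → ℝ,
      (∀ x, 0 < ρ x) ∧ ContDiff ℝ ∞ ρ ∧
      Measure.map (ouMap t) (μ.prod (gaussianM C))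
        = (gaussianM C).withDensity (fun x => ENNReal.ofReal (ρ x)) ∧
      (μ.prod (gaussianM C))[(fun p => p.1) |
          MeasurableSpace.comap (ouMap t) inferInstance]
        =ᵐ[μ.prod (gaussianM C)]
          fun p =>
            Real.exp (-t / 2) • ouMap t p +
              (Real.exp (t / 2) - Real.exp (-t / 2)) •
                toEuc (Matrix.mulVec C
                  (fromEuc (gradient (fun y => Real.log (ρ y)) (ouMap t p)))) := by
  set Λ := Matrix.toEuclideanCLM (𝕜 := ℝ) C⁻¹
  have hΛ : (Λ : EuclideanSpace ℝ (Fin d) →ₗ[ℝ] _).IsSymmetric :=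
    Matrix.isSymmetric_toEuclideanLin_iff.mpr hC.inv.isHermitian
  have hΛ_pos : ∀ x, x ≠ 0 → 0 < ⟪x, Λ x⟫ := fun _ => inner_toEuclideanCLM_pos hC.inv
  have ha : exp (-t / 2) ≠ 0 := exp_ne_zero _
  have hs : 0 < √(1 - exp (-t)) := sqrt_pos.mpr (by simpa using ht)
  have has := sq_exp_neg_half_add_sq_sqrt ht.le
  have hjoint := hasJointDensity_ouMap hC.det_pos.le μ ht
  have := isFiniteMeasure_gaussianM hC
  refine ⟨mehlerDensity Λ (exp (-t / 2)) √(1 - exp (-t)) μ,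
    mehlerDensity_pos hΛ hs has hΛ_pos ha, contDiff_mehlerDensity hΛ hs has hΛ_pos ha,
    hjoint.map_right_eq_withDensity, ?_⟩
  have hX : Integrable (fun p => id p.1) (μ.prod (gaussianM C)) :=
    ((integrable_norm_iff aestronglyMeasurable_id).mp hmom).comp_fst _
  filter_upwards [hjoint.condExp_ae_eq_posteriorMean stronglyMeasurable_id hX] with p hp
  rw [← sq_sqrt_div_exp_neg_half ht.le]
  exact hp.trans (posteriorMean_mehlerKernel_eq_add_score hΛ hs has hΛ_pos ha
    (toEuclideanCLM_nonsing_inv_apply hC.det_pos.ne'.isUnit) _)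

end OrnsteinUhlenbeck

/-- Γ-score identification (finite-dimensional case of Theorem 1): for `X₀ ~ μ ≪ γ` with
finite first moment, `Z ~ γ` independent, `t > 0` and `X_t = e^{-t/2} X₀ + √(1-e^{-t}) Z`,
the law `μ_t` of `X_t` has a strictly positive `C¹` density `ρ_t` with respect to `γ`, and
`E[X₀ | X_t] = e^{-t/2} X_t + (e^{t/2} - e^{-t/2}) C ∇ log ρ_t (X_t)` almost surely. -/
theorem gamma_score_eq_condexp (d : ℕ) (hd : 0 < d)
    (C : Matrix (Fin d) (Fin d) ℝ) (hC : C.PosDef)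
    (μ : Measure (EuclideanSpace ℝ (Fin d))) [IsProbabilityMeasure μ]
    (hac : μ ≪ gaussianM C)
    (hmom : Integrable (fun x : EuclideanSpace ℝ (Fin d) => ‖x‖) μ)
    (t : ℝ) (ht : 0 < t) :
    ∃ ρ : EuclideanSpace ℝ (Fin d) → ℝ,
      (∀ x, 0 < ρ x) ∧ ContDiff ℝ 1 ρ ∧
      Measure.map (ouMap t) (μ.prod (gaussianM C))
        = (gaussianM C).withDensity (fun x => ENNReal.ofReal (ρ x)) ∧
      (μ.prod (gaussianM C))[(fun p => p.1) |
          MeasurableSpace.comap (ouMap t) inferInstance]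
        =ᵐ[μ.prod (gaussianM C)]
          fun p =>
            Real.exp (-t / 2) • ouMap t p +
              (Real.exp (t / 2) - Real.exp (-t / 2)) •
                toEuc (Matrix.mulVec C
                  (fromEuc (gradient (fun y => Real.log (ρ y)) (ouMap t p)))) := by
  obtain ⟨ρ, hpos, hsmooth, hdensity, hscore⟩ := gamma_score_eq_condexp_general C hC μ hmom t ht
  exact ⟨ρ, hpos, hsmooth.of_le (mod_cast le_top), hdensity, hscore⟩
end

section
/- Let μ be a probability measure on ℝᵈ, let X ~ μ and Z ~ γ be independent, fix t ≥ 0, and let μ_t be the law of e^{-t/2} X + √(1 - e^{-t}) Z. Then KL(μ_t ‖ γ) ≤ e^{-t/2} · KL(μ ‖ γ). (The exponential entropy decay estimate (4.4) of the paper, proved via the Gaussian logarithmic Sobolev inequality and Gronwall's lemma.) -/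
open MeasureTheory Real Classical
open scoped ENNReal RealInnerProductSpace

/-- Kullback–Leibler divergence `KL(P‖Q) = ∫ log (dP/dQ) dP` if `P ≪ Q` (and the integral is
defined), and `KL(P‖Q) = +∞` otherwise. -/
noncomputable def KLdiv {α : Type*} [MeasurableSpace α] (P Q : Measure α) : ℝ≥0∞ :=
  if P ≪ Q ∧ Integrable (fun x => Real.log (P.rnDeriv Q x).toReal) P then
    ENNReal.ofReal (∫ x, Real.log (P.rnDeriv Q x).toReal ∂P)
  else ∞

/-!
Let `Φ r` be the divergence of the law of `√r X + √(1 - r) Z` from `γ`. Rotating the pair `(X, Z)`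
preserves the divergence of its law from `γ × γ`, and adjoining a second noise variable `W` to it
makes the submodularity of relative entropy with respect to product measures (chain rule and data
processing) applicable; it gives `2 Φ(r) ≤ Φ(1) + Φ(2r - 1)` for `r ≥ 1/2`. The semigroup property
turns the case `r = 1/2` into `2 Φ(r) ≤ Φ(2r)` for `r ≤ 1/2`. Bisection then yields `Φ(r) ≤ r Φ(1)`,
and `r = e^{-t}` is the even stronger rate `e^{-t}` in place of `e^{-t/2}`.
-/

open ProbabilityTheory InformationTheory
open scoped MatrixOrder

section RelativeEntropy

variable {A B : Type*} [MeasurableSpace A] [MeasurableSpace B]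

theorem klDiv_prod_eq_add [StandardBorelSpace B] [Nonempty B] (P : Measure (A × B))
    [IsFiniteMeasure P] (Q : Measure A) [IsFiniteMeasure Q] (R : Measure B)
    [IsProbabilityMeasure R] :
    klDiv P (Q.prod R) = klDiv P.fst Q + klDiv P (P.fst.prod R) := by
  have h := klDiv_compProd_eq_add P.fst Q P.condKernel (Kernel.const A R)
  rwa [P.disintegrate, Measure.compProd_const, Measure.compProd_const] at h

theorem klDiv_prod_prod_right (P Q : Measure A) [IsFiniteMeasure P] [IsFiniteMeasure Q]
    (R : Measure B) [IsProbabilityMeasure R] :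
    klDiv (P.prod R) (Q.prod R) = klDiv P Q := by
  have h := klDiv_compProd_left P Q (Kernel.const A R)
  rwa [Measure.compProd_const, Measure.compProd_const] at h

/- By the chain rule, the two pairs of terms compare how far `P`, respectively its image under
`f × id`, is from having an independent second coordinate. -/
theorem klDiv_fst_add_klDiv_map_le {D : Type*} [MeasurableSpace D] [StandardBorelSpace D]
    [Nonempty D] (P : Measure (A × D)) [IsFiniteMeasure P] (Q : Measure A) [IsFiniteMeasure Q]
    (R : Measure D) [IsProbabilityMeasure R] {f : A → B} (hf : Measurable f) :
    klDiv P.fst Q + klDiv (P.map (Prod.map f id)) ((Q.map f).prod R)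
      ≤ klDiv P (Q.prod R) + klDiv (P.fst.map f) (Q.map f) := by
  have hfid : Measurable (Prod.map f (id : D → D)) := hf.prodMap measurable_id
  have fst_map : (P.map (Prod.map f id)).fst = P.fst.map f := by
    rw [Measure.fst, Measure.fst, Measure.map_map measurable_fst hfid,
      Measure.map_map hf measurable_fst]
    rfl
  have map_prod : (P.fst.prod R).map (Prod.map f id) = (P.fst.map f).prod R := by
    rw [← Measure.map_prod_map _ _ hf measurable_id, Measure.map_id]
  have data_processing :
      klDiv (P.map (Prod.map f id)) ((P.fst.map f).prod R) ≤ klDiv P (P.fst.prod R) :=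
    map_prod ▸ klDiv_map_le P (P.fst.prod R) hfid
  calc klDiv P.fst Q + klDiv (P.map (Prod.map f id)) ((Q.map f).prod R)
      = klDiv P.fst Q + (klDiv (P.fst.map f) (Q.map f)
          + klDiv (P.map (Prod.map f id)) ((P.fst.map f).prod R)) := by
        rw [klDiv_prod_eq_add (P.map (Prod.map f id)), fst_map]
    _ ≤ klDiv P.fst Q + (klDiv (P.fst.map f) (Q.map f) + klDiv P (P.fst.prod R)) := by gcongr
    _ = klDiv P (Q.prod R) + klDiv (P.fst.map f) (Q.map f) := by
        rw [klDiv_prod_eq_add P Q R, add_right_comm, add_assoc]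

end RelativeEntropy

section Bisection

variable {Φ : ℝ → ℝ≥0∞} {K : ℝ≥0∞}

theorem le_ofReal_add_pow_mul_of_bisection (hK : ∀ r ∈ Set.Icc (0 : ℝ) 1, Φ r ≤ K)
    (hleft : ∀ r ∈ Set.Icc (0 : ℝ) (1 / 2), 2 * Φ r ≤ Φ (2 * r))
    (hright : ∀ r ∈ Set.Icc (1 / 2 : ℝ) 1, 2 * Φ r ≤ K + Φ (2 * r - 1))
    (n : ℕ) {r : ℝ} (hr : r ∈ Set.Icc (0 : ℝ) 1) :
    Φ r ≤ ENNReal.ofReal (r + (1 / 2) ^ n) * K := by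
  induction n generalizing r with
  | zero =>
    refine (hK r hr).trans (le_mul_of_one_le_left' ?_)
    rw [ENNReal.one_le_ofReal, pow_zero]
    linarith [hr.1]
  | succ n ih =>
    obtain ⟨hr0, hr1⟩ := hr
    have halve {x y : ℝ≥0∞} (h : 2 * x ≤ 2 * y) : x ≤ y :=
      (ENNReal.mul_le_mul_iff_right two_ne_zero ENNReal.ofNat_ne_top).1 h
    have two_mul_ofReal (x : ℝ) : 2 * ENNReal.ofReal x = ENNReal.ofReal (2 * x) := by
      rw [ENNReal.ofReal_mul zero_le_two, ENNReal.ofReal_ofNat]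
    apply halve
    rw [← mul_assoc, two_mul_ofReal]
    rcases le_total r (1 / 2) with h | h
    · calc 2 * Φ r ≤ Φ (2 * r) := hleft r ⟨hr0, h⟩
        _ ≤ ENNReal.ofReal (2 * r + (1 / 2) ^ n) * K := ih ⟨by linarith, by linarith⟩
        _ = ENNReal.ofReal (2 * (r + (1 / 2) ^ (n + 1))) * K := by ring_nf
    · calc 2 * Φ r ≤ K + Φ (2 * r - 1) := hright r ⟨h, hr1⟩
        _ ≤ K + ENNReal.ofReal (2 * r - 1 + (1 / 2) ^ n) * K := by
          gcongr
          exact ih ⟨by linarith, by linarith⟩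
        _ = ENNReal.ofReal (1 + (2 * r - 1 + (1 / 2) ^ n)) * K := by
          rw [ENNReal.ofReal_add zero_le_one (add_nonneg (by linarith) (by positivity)),
            ENNReal.ofReal_one, add_mul, one_mul]
        _ = ENNReal.ofReal (2 * (r + (1 / 2) ^ (n + 1))) * K := by ring_nf

theorem le_ofReal_mul_of_bisection (hK : ∀ r ∈ Set.Icc (0 : ℝ) 1, Φ r ≤ K)
    (hleft : ∀ r ∈ Set.Icc (0 : ℝ) (1 / 2), 2 * Φ r ≤ Φ (2 * r))
    (hright : ∀ r ∈ Set.Icc (1 / 2 : ℝ) 1, 2 * Φ r ≤ K + Φ (2 * r - 1))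
    {r : ℝ} (hr : r ∈ Set.Ioc (0 : ℝ) 1) :
    Φ r ≤ ENNReal.ofReal r * K := by
  have tendsto_r : Filter.Tendsto (fun n : ℕ ↦ r + (1 / 2 : ℝ) ^ n) Filter.atTop (nhds r) := by
    simpa using (tendsto_pow_atTop_nhds_zero_of_lt_one (r := (1 / 2 : ℝ)) (by norm_num)
      (by norm_num)).const_add r
  exact ge_of_tendsto' (ENNReal.Tendsto.mul_const (ENNReal.tendsto_ofReal tendsto_r)
    (.inl (ENNReal.ofReal_pos.2 hr.1).ne')) fun n ↦
      le_ofReal_add_pow_mul_of_bisection hK hleft hright n (Set.Ioc_subset_Icc_self hr)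

end Bisection

section LinearCombinations

variable {E : Type*} [NormedAddCommGroup E] [NormedSpace ℝ E] [MeasurableSpace E] [BorelSpace E]
  [SecondCountableTopology E]

/-- The law of `a X + b Y` for independent `X ∼ μ` and `Y ∼ ν`. -/
noncomputable def linCombLaw (μ ν : Measure E) (a b : ℝ) : Measure E :=
  (μ.prod ν).map fun p ↦ a • p.1 + b • p.2

instance (μ ν : Measure E) [IsProbabilityMeasure μ] [IsProbabilityMeasure ν] (a b : ℝ) :
    IsProbabilityMeasure (linCombLaw μ ν a b) :=
  Measure.isProbabilityMeasure_map (by fun_prop)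

theorem linCombLaw_linCombLaw (μ ν σ : Measure E) [SFinite μ] [SFinite ν] [SFinite σ]
    (a b c e : ℝ) :
    linCombLaw (linCombLaw μ ν a b) σ c e =
      ((μ.prod ν).prod σ).map fun x ↦ (c * a) • x.1.1 + (c * b) • x.1.2 + e • x.2 := by
  have h : (linCombLaw μ ν a b).prod σ = ((μ.prod ν).prod σ).map
      (Prod.map (fun p ↦ a • p.1 + b • p.2) id) := by
    rw [← Measure.map_prod_map _ _ (by fun_prop) measurable_id, Measure.map_id, linCombLaw]
  rw [linCombLaw, h, Measure.map_map (by fun_prop) (by fun_prop)]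
  simp only [Function.comp_def, Prod.map, id_eq, smul_add, smul_smul]

theorem charFunDual_linCombLaw (μ ν : Measure E) [SFinite μ] [SFinite ν] (a b : ℝ)
    (L : StrongDual ℝ E) :
    charFunDual (linCombLaw μ ν a b) L = charFunDual μ (a • L) * charFunDual ν (b • L) := by
  have h := charFunDual_map (μ := μ.prod ν)
    (a • ContinuousLinearMap.fst ℝ E E + b • ContinuousLinearMap.snd ℝ E E) L
  rw [charFunDual_prod] at h
  refine h.trans ?_
  congr 2 <;> ext x <;> simp

omit [BorelSpace E] [SecondCountableTopology E] in
theorem linCombLaw_zero_one (μ ν : Measure E) [IsProbabilityMeasure μ] [SFinite ν] :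
    linCombLaw μ ν 0 1 = ν := by
  simp [linCombLaw]

/-- The linear map `((x, z), w) ↦ ((w, y), d)` where `(y, d)` is `(x, z)` rotated by `θ`: it turns
the independent variables `X`, `Z`, `W` into the three blocks on which submodularity is used. -/
noncomputable def rotateBlocks (θ : ℝ) (x : (E × E) × E) : (E × E) × E :=
  ((x.2, cos θ • x.1.1 + sin θ • x.1.2), -sin θ • x.1.1 + cos θ • x.1.2)

theorem measurable_rotateBlocks (θ : ℝ) : Measurable (rotateBlocks (E := E) θ) := by
  unfold rotateBlocks
  fun_prop

/-- The law of `rotateBlocks θ ((X, Z), W)` for independent `X ∼ μ`, `Z ∼ γ` and `W ∼ γ`. -/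
noncomputable def rotatedLaw (μ γ : Measure E) (θ : ℝ) : Measure ((E × E) × E) :=
  ((μ.prod γ).prod γ).map (rotateBlocks θ)

instance (μ γ : Measure E) [IsProbabilityMeasure μ] [IsProbabilityMeasure γ] (θ : ℝ) :
    IsProbabilityMeasure (rotatedLaw μ γ θ) :=
  Measure.isProbabilityMeasure_map (measurable_rotateBlocks θ).aemeasurable

end LinearCombinations

section CenteredGaussian

variable {E : Type*} [NormedAddCommGroup E] [NormedSpace ℝ E] [MeasurableSpace E] [BorelSpace E]
  [SecondCountableTopology E] [CompleteSpace E] {γ : Measure E} [IsGaussian γ]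

theorem charFunDual_smul_of_centered (hγ : ∫ x, x ∂γ = 0) (a : ℝ) (L : StrongDual ℝ E) :
    charFunDual γ (a • L) = Complex.exp (-(a ^ 2 * Var[L; γ]) / 2) := by
  rw [IsGaussian.charFunDual_eq_of_integral_eq_zero hγ, FunLike.coe_smul, variance_smul]
  push_cast
  rfl

theorem linCombLaw_linCombLaw_gaussian (hγ : ∫ x, x ∂γ = 0) (μ : Measure E)
    [IsProbabilityMeasure μ] {a b c e f : ℝ} (h : (c * b) ^ 2 + e ^ 2 = f ^ 2) :
    linCombLaw (linCombLaw μ γ a b) γ c e = linCombLaw μ γ (c * a) f := by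
  refine Measure.ext_of_charFunDual (funext fun L ↦ ?_)
  simp only [charFunDual_linCombLaw, smul_smul, charFunDual_smul_of_centered hγ]
  rw [mul_assoc, ← Complex.exp_add, mul_comm a, mul_comm b]
  congr 2
  have h' : ((c * b) ^ 2 + e ^ 2 : ℂ) = f ^ 2 := mod_cast h
  push_cast
  rw [← h']
  ring

theorem linCombLaw_gaussian_self (hγ : ∫ x, x ∂γ = 0) {a b : ℝ} (h : a ^ 2 + b ^ 2 = 1) :
    linCombLaw γ γ a b = γ := by
  refine Measure.ext_of_charFunDual (funext fun L ↦ ?_)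
  have h' : (a ^ 2 + b ^ 2 : ℂ) = 1 := mod_cast h
  rw [charFunDual_linCombLaw, charFunDual_smul_of_centered hγ, charFunDual_smul_of_centered hγ,
    ← Complex.exp_add, IsGaussian.charFunDual_eq_of_integral_eq_zero hγ, ← add_div, ← neg_add,
    ← add_mul, h', one_mul]

theorem map_linearForm_prod_prod (hγ : ∫ x, x ∂γ = 0) (μ : Measure E) [IsProbabilityMeasure μ]
    {a b e f : ℝ} (h : b ^ 2 + e ^ 2 = f ^ 2) :
    ((μ.prod γ).prod γ).map (fun x ↦ a • x.1.1 + b • x.1.2 + e • x.2) = linCombLaw μ γ a f := by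
  have := linCombLaw_linCombLaw μ γ γ a b 1 e
  rw [linCombLaw_linCombLaw_gaussian hγ μ (by rwa [one_mul])] at this
  simpa only [one_mul] using this.symm

theorem klDiv_linCombLaw_le (hγ : ∫ x, x ∂γ = 0) (μ : Measure E) [IsProbabilityMeasure μ]
    {a b : ℝ} (h : a ^ 2 + b ^ 2 = 1) : klDiv (linCombLaw μ γ a b) γ ≤ klDiv μ γ := by
  calc klDiv (linCombLaw μ γ a b) γ
      = klDiv (linCombLaw μ γ a b) (linCombLaw γ γ a b) := by rw [linCombLaw_gaussian_self hγ h]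
    _ ≤ klDiv (μ.prod γ) (γ.prod γ) := klDiv_map_le _ _ (by fun_prop)
    _ = klDiv μ γ := klDiv_prod_prod_right μ γ γ

theorem measurePreserving_rotateBlocks (hγ : ∫ x, x ∂γ = 0) (θ : ℝ) :
    MeasurePreserving (rotateBlocks θ) ((γ.prod γ).prod γ) ((γ.prod γ).prod γ) := by
  have rotation : MeasurePreserving (ContinuousLinearMap.rotation θ) (γ.prod γ) (γ.prod γ) :=
    ⟨by fun_prop, IsGaussian.map_rotation_eq_self hγ θ⟩
  exact ((measurePreserving_prodAssoc γ γ γ).symm.comp Measure.measurePreserving_swap).comp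
    (rotation.prod (.id γ))

theorem klDiv_rotatedLaw_le (hγ : ∫ x, x ∂γ = 0) (μ : Measure E) [IsProbabilityMeasure μ]
    (θ : ℝ) : klDiv (rotatedLaw μ γ θ) ((γ.prod γ).prod γ) ≤ klDiv μ γ := by
  calc klDiv (rotatedLaw μ γ θ) ((γ.prod γ).prod γ)
      = klDiv (rotatedLaw μ γ θ) (((γ.prod γ).prod γ).map (rotateBlocks θ)) := by
        rw [(measurePreserving_rotateBlocks hγ θ).map_eq]
    _ ≤ klDiv ((μ.prod γ).prod γ) ((γ.prod γ).prod γ) :=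
        klDiv_map_le _ _ (measurable_rotateBlocks θ)
    _ = klDiv μ γ := by rw [klDiv_prod_prod_right, klDiv_prod_prod_right]

theorem map_rotatedLaw (hγ : ∫ x, x ∂γ = 0) (μ : Measure E) [IsProbabilityMeasure μ]
    {θ a b e f : ℝ} {g : (E × E) × E → E} (hg : Measurable g)
    (hgθ : ∀ x z w, g (rotateBlocks θ ((x, z), w)) = a • x + b • z + e • w)
    (h : b ^ 2 + e ^ 2 = f ^ 2) :
    (rotatedLaw μ γ θ).map g = linCombLaw μ γ a f := by
  rw [rotatedLaw, Measure.map_map hg (measurable_rotateBlocks θ),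
    ← map_linearForm_prod_prod hγ μ h]
  exact congrArg (Measure.map · _) (funext fun x ↦ hgθ x.1.1 x.1.2 x.2)

theorem klDiv_linCombLaw_le_klDiv_fst (hγ : ∫ x, x ∂γ = 0) (μ : Measure E)
    [IsProbabilityMeasure μ] (θ : ℝ) :
    klDiv (linCombLaw μ γ (cos θ) (sin θ)) γ ≤ klDiv (rotatedLaw μ γ θ).fst (γ.prod γ) := by
  have law_snd : (rotatedLaw μ γ θ).fst.map Prod.snd = linCombLaw μ γ (cos θ) (sin θ) := by
    rw [Measure.fst, Measure.map_map measurable_snd measurable_fst]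
    refine map_rotatedLaw hγ μ (b := sin θ) (e := 0) (by fun_prop) (fun x z w ↦ ?_) (by ring)
    simp only [rotateBlocks, Function.comp_apply, zero_smul, add_zero]
  have h := klDiv_map_le (rotatedLaw μ γ θ).fst (γ.prod γ) measurable_snd
  rwa [law_snd, ← Measure.snd, Measure.snd_prod] at h

/- The relation between the angles makes `x` enter `cos φ • (sin φ • w + cos φ • y) - sin φ • d`
with coefficient `cos θ`, so that this variable has the same law as `y`. -/
theorem klDiv_linCombLaw_le_klDiv_map (hγ : ∫ x, x ∂γ = 0) (μ : Measure E)
    [IsProbabilityMeasure μ] {θ φ : ℝ} (hθφ : sin θ = sin φ * cos θ) :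
    klDiv (linCombLaw μ γ (cos θ) (sin θ)) γ
      ≤ klDiv ((rotatedLaw μ γ θ).map
          (Prod.map (fun x ↦ sin φ • x.1 + cos φ • x.2) id)) (γ.prod γ) := by
  have hθ := cos_sq_add_sin_sq θ
  have hφ := cos_sq_add_sin_sq φ
  set f : E × E → E := fun x ↦ sin φ • x.1 + cos φ • x.2
  set g : E × E → E := fun x ↦ cos φ • x.1 + (-sin φ) • x.2
  have hg : Measurable g := by fun_prop
  have map_g : (γ.prod γ).map g = γ := linCombLaw_gaussian_self hγ (by rw [neg_sq, hφ])
  have law_g : ((rotatedLaw μ γ θ).map (Prod.map f id)).map g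
      = linCombLaw μ γ (cos θ) (sin θ) := by
    rw [Measure.map_map hg (by fun_prop)]
    refine map_rotatedLaw hγ μ (b := cos φ ^ 2 * sin θ - sin θ) (e := cos φ * sin φ)
      (by fun_prop) (fun x z w ↦ ?_) ?_
    · have coeff : cos φ ^ 2 * cos θ + sin φ * sin θ = cos θ := by
        linear_combination sin φ * hθφ + cos θ * hφ
      simp only [f, g, rotateBlocks, Function.comp_apply, Prod.map, id_eq]
      linear_combination (norm := module) coeff • x + hθφ • z
    · linear_combination cos φ ^ 2 * (sin θ ^ 2 * hφ - sin φ ^ 2 * hθ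
        - (sin θ + sin φ * cos θ) * hθφ)
  have h := klDiv_map_le ((rotatedLaw μ γ θ).map (Prod.map f id)) (γ.prod γ) hg
  rwa [law_g, map_g] at h

theorem two_mul_klDiv_linCombLaw_le (hγ : ∫ x, x ∂γ = 0) (μ : Measure E)
    [IsProbabilityMeasure μ] {θ φ v : ℝ} (hθφ : sin θ = sin φ * cos θ)
    (hv : (cos φ * cos θ) ^ 2 + v ^ 2 = 1) :
    2 * klDiv (linCombLaw μ γ (cos θ) (sin θ)) γ
      ≤ klDiv μ γ + klDiv (linCombLaw μ γ (cos φ * cos θ) v) γ := by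
  have hθ := cos_sq_add_sin_sq θ
  have hφ := cos_sq_add_sin_sq φ
  set P := rotatedLaw μ γ θ
  set f : E × E → E := fun x ↦ sin φ • x.1 + cos φ • x.2
  have hf : Measurable f := by fun_prop
  have map_f : (γ.prod γ).map f = γ := linCombLaw_gaussian_self hγ (by rw [add_comm, hφ])
  have law_f : P.fst.map f = linCombLaw μ γ (cos φ * cos θ) v := by
    rw [Measure.fst, Measure.map_map hf measurable_fst]
    refine map_rotatedLaw hγ μ (b := cos φ * sin θ) (e := sin φ) (by fun_prop)
      (fun x z w ↦ ?_) (by linear_combination cos φ ^ 2 * hθ + hφ - hv)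
    simp only [f, rotateBlocks, Function.comp_apply]
    module
  calc 2 * klDiv (linCombLaw μ γ (cos θ) (sin θ)) γ
      ≤ klDiv P.fst (γ.prod γ) + klDiv (P.map (Prod.map f id)) (γ.prod γ) := by
        rw [two_mul]
        exact add_le_add (klDiv_linCombLaw_le_klDiv_fst hγ μ θ)
          (klDiv_linCombLaw_le_klDiv_map hγ μ hθφ)
    _ ≤ klDiv P ((γ.prod γ).prod γ) + klDiv (P.fst.map f) γ := by
        simpa only [map_f] using klDiv_fst_add_klDiv_map_le P (γ.prod γ) γ hf
    _ ≤ klDiv μ γ + klDiv (linCombLaw μ γ (cos φ * cos θ) v) γ := by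
        rw [law_f]
        gcongr
        exact klDiv_rotatedLaw_le hγ μ θ

theorem two_mul_klDiv_linCombLaw_sqrt_le_add (hγ : ∫ x, x ∂γ = 0) (μ : Measure E)
    [IsProbabilityMeasure μ] {r : ℝ} (hr : r ∈ Set.Icc (1 / 2 : ℝ) 1) :
    2 * klDiv (linCombLaw μ γ √r √(1 - r)) γ
      ≤ klDiv μ γ + klDiv (linCombLaw μ γ √(2 * r - 1) √(1 - (2 * r - 1))) γ := by
  obtain ⟨hr2, hr1⟩ := hr
  have hr0 : 0 < r := by linarith
  have hs : (2 * r - 1) / r ≤ 1 := by rw [div_le_one hr0]; linarith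
  have cosθ : cos (arccos √r) = √r :=
    cos_arccos (by linarith [sqrt_nonneg r]) (sqrt_le_one.2 hr1)
  have sinθ : sin (arccos √r) = √(1 - r) := by rw [sin_arccos, sq_sqrt hr0.le]
  have cosφ : cos (arccos √((2 * r - 1) / r)) = √((2 * r - 1) / r) :=
    cos_arccos (by linarith [sqrt_nonneg ((2 * r - 1) / r)]) (sqrt_le_one.2 hs)
  have sinφ : sin (arccos √((2 * r - 1) / r)) = √((1 - r) / r) := by
    rw [sin_arccos, sq_sqrt (div_nonneg (by linarith) hr0.le)]
    congr 1
    field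
  have cos_mul_cos : √((2 * r - 1) / r) * √r = √(2 * r - 1) := by
    rw [← sqrt_mul' _ hr0.le, div_mul_cancel₀ _ hr0.ne']
  have h := two_mul_klDiv_linCombLaw_le hγ μ (θ := arccos √r)
    (φ := arccos √((2 * r - 1) / r)) (v := √(1 - (2 * r - 1)))
    (by rw [sinθ, sinφ, cosθ, ← sqrt_mul' _ hr0.le, div_mul_cancel₀ _ hr0.ne'])
    (by rw [cosθ, cosφ, cos_mul_cos, sq_sqrt (by linarith), sq_sqrt (by linarith)]; ring)
  rwa [cosφ, cosθ, sinθ, cos_mul_cos] at h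

theorem two_mul_klDiv_linCombLaw_sqrt_le (hγ : ∫ x, x ∂γ = 0) (μ : Measure E)
    [IsProbabilityMeasure μ] {r : ℝ} (hr : r ∈ Set.Icc (0 : ℝ) (1 / 2)) :
    2 * klDiv (linCombLaw μ γ √r √(1 - r)) γ
      ≤ klDiv (linCombLaw μ γ √(2 * r) √(1 - 2 * r)) γ := by
  have semigroup : linCombLaw (linCombLaw μ γ √(2 * r) √(1 - 2 * r)) γ √(1 / 2) √(1 - 1 / 2)
      = linCombLaw μ γ √r √(1 - r) := by
    rw [linCombLaw_linCombLaw_gaussian hγ μ (f := √(1 - r)), ← sqrt_mul (by norm_num)]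
    · ring_nf
    · rw [mul_pow, sq_sqrt (by norm_num), sq_sqrt (by linarith [hr.2]), sq_sqrt (by norm_num),
        sq_sqrt (by linarith [hr.1, hr.2])]
      ring
  have h := two_mul_klDiv_linCombLaw_sqrt_le_add hγ (linCombLaw μ γ √(2 * r) √(1 - 2 * r))
    (r := 1 / 2) (by norm_num)
  rw [semigroup] at h
  simpa [linCombLaw_zero_one, klDiv_self] using h

theorem klDiv_linCombLaw_sqrt_le (hγ : ∫ x, x ∂γ = 0) (μ : Measure E)
    [IsProbabilityMeasure μ] {r : ℝ} (hr : r ∈ Set.Ioc (0 : ℝ) 1) :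
    klDiv (linCombLaw μ γ √r √(1 - r)) γ ≤ ENNReal.ofReal r * klDiv μ γ :=
  le_ofReal_mul_of_bisection (Φ := fun r ↦ klDiv (linCombLaw μ γ √r √(1 - r)) γ)
    (fun _ hr ↦ klDiv_linCombLaw_le hγ μ (by
      rw [sq_sqrt hr.1, sq_sqrt (sub_nonneg.2 hr.2), add_sub_cancel]))
    (fun _ ↦ two_mul_klDiv_linCombLaw_sqrt_le hγ μ)
    (fun _ ↦ two_mul_klDiv_linCombLaw_sqrt_le_add hγ μ) hr

end CenteredGaussian

section GaussianDensity

variable {E : Type*} [NormedAddCommGroup E] [InnerProductSpace ℝ E] [FiniteDimensional ℝ E]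
  [MeasurableSpace E] [BorelSpace E]

theorem integrable_exp_neg_sq_norm_div_two : Integrable fun x : E ↦ rexp (-‖x‖ ^ 2 / 2) := by
  have h := (GaussianFourier.integrable_cexp_neg_mul_sq_norm_add (V := E) (b := 1 / 2)
    (by norm_num) 0 0).re
  refine h.congr (.of_forall fun x ↦ ?_)
  have : -(1 / 2) * (‖x‖ : ℂ) ^ 2 + 0 * (⟪(0 : E), x⟫ : ℂ) = ((-‖x‖ ^ 2 / 2 : ℝ) : ℂ) := by
    push_cast; ring
  simp only [this, RCLike.re_eq_complex_re, Complex.exp_ofReal_re]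

theorem stdGaussian_eq_withDensity :
    stdGaussian E = volume.withDensity fun x ↦
      ENNReal.ofReal ((2 * π) ^ (-(Module.finrank ℝ E : ℝ) / 2) * rexp (-‖x‖ ^ 2 / 2)) := by
  set c : ℝ := (2 * π) ^ (-(Module.finrank ℝ E : ℝ) / 2)
  have : IsFiniteMeasure
      (volume.withDensity fun x : E ↦ ENNReal.ofReal (c * rexp (-‖x‖ ^ 2 / 2))) :=
    isFiniteMeasure_withDensity_ofReal (integrable_exp_neg_sq_norm_div_two.const_mul c).2
  refine Measure.ext_of_charFun (funext fun t ↦ ?_)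
  have integrand (x : E) :
      (ENNReal.ofReal (c * rexp (-‖x‖ ^ 2 / 2))).toReal • Complex.exp (⟪x, t⟫ * Complex.I)
        = c * Complex.exp (-(1 / 2 : ℂ) * ‖x‖ ^ 2 + Complex.I * ⟪t, x⟫) := by
    rw [ENNReal.toReal_ofReal (by positivity), Complex.real_smul, Complex.ofReal_mul,
      mul_assoc, Complex.ofReal_exp, ← Complex.exp_add, real_inner_comm]
    push_cast
    ring_nf
  have normalization : (c : ℂ) * (π / (1 / 2 : ℂ)) ^ (Module.finrank ℝ E / 2 : ℂ) = 1 := by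
    have h : (π / (1 / 2 : ℂ)) ^ (Module.finrank ℝ E / 2 : ℂ)
        = (((2 * π) ^ (Module.finrank ℝ E / 2 : ℝ) : ℝ) : ℂ) := by
      rw [Complex.ofReal_cpow (by positivity)]
      push_cast
      congr 1
      ring
    rw [h, ← Complex.ofReal_mul, ← rpow_add (by positivity), neg_div, neg_add_cancel, rpow_zero,
      Complex.ofReal_one]
  rw [charFun_stdGaussian, charFun_apply, integral_withDensity_eq_integral_toReal_smul
    (by fun_prop) (.of_forall fun _ ↦ ENNReal.ofReal_lt_top)]
  simp only [integrand]
  rw [integral_const_mul, GaussianFourier.integral_cexp_neg_mul_sq_norm_add (by norm_num),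
    ← mul_assoc, normalization, one_mul, Complex.I_sq]
  congr 1
  ring

end GaussianDensity

section LinearImage

theorem map_withDensity_comp {α β : Type*} [MeasurableSpace α] [MeasurableSpace β]
    (ν : Measure α) {T : α → β} (hT : Measurable T) {g : β → ℝ≥0∞} (hg : Measurable g) :
    (ν.withDensity (g ∘ T)).map T = (ν.map T).withDensity g := by
  ext s hs
  rw [Measure.map_apply hT hs, withDensity_apply _ (hT hs), withDensity_apply _ hs,
    setLIntegral_map hs hg hT]
  rfl

theorem map_withDensity_comp_linearMap {F : Type*} [NormedAddCommGroup F] [NormedSpace ℝ F]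
    [FiniteDimensional ℝ F] [MeasurableSpace F] [BorelSpace F] (ν : Measure F)
    [ν.IsAddHaarMeasure] {T : F →L[ℝ] F} (hT : T.det ≠ 0) {g : F → ℝ≥0∞} (hg : Measurable g) :
    (ν.withDensity (g ∘ T)).map T =
      ν.withDensity fun x ↦ ENNReal.ofReal |T.det⁻¹| * g x := by
  have map_ν : ν.map T = ENNReal.ofReal |T.det⁻¹| • ν :=
    Measure.map_linearMap_addHaar_eq_smul_addHaar ν (f := (T : F →ₗ[ℝ] F)) hT
  rw [map_withDensity_comp ν T.measurable hg, map_ν, withDensity_smul_measure,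
    ← withDensity_smul _ hg]
  rfl

end LinearImage

section CovarianceSqrt

variable {ι : Type*} [Fintype ι] [DecidableEq ι] {C : Matrix ι ι ℝ}

theorem sqrt_mul_inv_mul_sqrt (hC : C.PosDef) : CFC.sqrt C * C⁻¹ * CFC.sqrt C = 1 := by
  have hS : CFC.sqrt C * CFC.sqrt C = C := CFC.sqrt_mul_sqrt_self C hC.posSemidef.nonneg
  have hdet : IsUnit (CFC.sqrt C).det := by
    refine isUnit_iff_ne_zero.2 fun h ↦ hC.det_pos.ne' ?_
    rw [← hS, Matrix.det_mul, h, zero_mul]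
  nth_rewrite 2 [← hS]
  rw [Matrix.mul_inv_rev, ← mul_assoc, Matrix.mul_nonsing_inv _ hdet, one_mul,
    Matrix.nonsing_inv_mul _ hdet]

theorem inner_toEuclideanCLM_sqrt_inv_sqrt (hC : C.PosDef) (x : EuclideanSpace ℝ ι) :
    ⟪Matrix.toEuclideanCLM (𝕜 := ℝ) (CFC.sqrt C) x,
      Matrix.toEuclideanCLM (𝕜 := ℝ) C⁻¹ (Matrix.toEuclideanCLM (𝕜 := ℝ) (CFC.sqrt C) x)⟫
        = ‖x‖ ^ 2 := by
  have self_adjoint : IsSelfAdjoint (Matrix.toEuclideanCLM (𝕜 := ℝ) (CFC.sqrt C)) :=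
    (CFC.sqrt_nonneg C).isSelfAdjoint.map Matrix.toEuclideanCLM
  rw [self_adjoint.isSymmetric.apply_clm, ← mul_apply_eq_comp, ← mul_apply_eq_comp, ← map_mul,
    ← map_mul, sqrt_mul_inv_mul_sqrt hC, map_one, one_apply_eq_self, real_inner_self_eq_norm_sq]

theorem det_toEuclideanCLM_sqrt (hC : C.PosSemidef) :
    (Matrix.toEuclideanCLM (𝕜 := ℝ) (CFC.sqrt C)).det = √C.det := by
  rw [ContinuousLinearMap.det, Matrix.coe_toEuclideanCLM_eq_toEuclideanLin]
  exact (LinearMap.det_toLpLin 2 _).trans (by simp [hC.det_sqrt])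

end CovarianceSqrt

theorem gaussianM_eq_multivariateGaussian {d : ℕ} {C : Matrix (Fin d) (Fin d) ℝ}
    (hC : C.PosDef) : gaussianM C = multivariateGaussian 0 C := by
  set T := Matrix.toEuclideanCLM (𝕜 := ℝ) (CFC.sqrt C) with hT
  have det_T : T.det = √C.det := det_toEuclideanCLM_sqrt hC.posSemidef
  have det_rpow : C.det ^ (-(1 : ℝ) / 2) = (√C.det)⁻¹ := by
    rw [neg_div, rpow_neg hC.det_pos.le, sqrt_eq_rpow]
  have hdet : 0 < √C.det := sqrt_pos.2 hC.det_pos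
  let g (x : EuclideanSpace ℝ (Fin d)) : ℝ≥0∞ := ENNReal.ofReal ((2 * π) ^ (-(d : ℝ) / 2) *
    rexp (-⟪x, Matrix.toEuclideanCLM (𝕜 := ℝ) C⁻¹ x⟫ / 2))
  have hg : Measurable g := by fun_prop
  have std : stdGaussian (EuclideanSpace ℝ (Fin d)) = volume.withDensity (g ∘ T) := by
    rw [stdGaussian_eq_withDensity]
    congr with x
    simp only [g, Function.comp_apply, hT, inner_toEuclideanCLM_sqrt_inv_sqrt hC,
      finrank_euclideanSpace_fin]
  rw [multivariateGaussian]
  simp only [zero_add, ← hT]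
  rw [std, map_withDensity_comp_linearMap _ (det_T ▸ hdet.ne') hg, gaussianM, det_T]
  congr with x
  rw [← ENNReal.ofReal_mul (abs_nonneg _), abs_of_nonneg (by positivity), det_rpow, ← mul_assoc,
    mul_comm (√C.det)⁻¹]
  rfl

theorem KLdiv_eq_klDiv {α : Type*} [MeasurableSpace α] {P Q : Measure α}
    (h : P Set.univ = Q Set.univ) : KLdiv P Q = klDiv P Q := by
  have hreal : Q.real Set.univ = P.real Set.univ := by rw [Measure.real, Measure.real, h]
  simp only [KLdiv, klDiv_def, hreal, add_sub_cancel_right, llr_def]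

theorem kl_decay_ou_general {E : Type*} [NormedAddCommGroup E] [NormedSpace ℝ E]
    [MeasurableSpace E] [BorelSpace E] [SecondCountableTopology E] [CompleteSpace E]
    {γ : Measure E} [IsGaussian γ] (hγ : ∫ x, x ∂γ = 0) (μ : Measure E) [IsProbabilityMeasure μ]
    {t : ℝ} (ht : 0 ≤ t) :
    KLdiv (Measure.map (fun p : E × E ↦ Real.exp (-t / 2) • p.1 + √(1 - Real.exp (-t)) • p.2)
        (μ.prod γ)) γ
      ≤ ENNReal.ofReal (Real.exp (-t)) * KLdiv μ γ := by
  have decay := klDiv_linCombLaw_sqrt_le hγ μ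
    (r := Real.exp (-t)) ⟨Real.exp_pos _, Real.exp_le_one_iff.2 (neg_nonpos.2 ht)⟩
  rw [← Real.exp_half, ← KLdiv_eq_klDiv (by simp), ← KLdiv_eq_klDiv (by simp)] at decay
  exact decay

/-- Exponential entropy decay along the Ornstein–Uhlenbeck forward noising process:
if `μ_t` is the law of `e^{-t/2} X + √(1-e^{-t}) Z` with `X ~ μ`, `Z ~ γ` independent, then
`KL(μ_t ‖ γ) ≤ e^{-t/2} KL(μ ‖ γ)`. -/
theorem kl_decay_ou (d : ℕ) (hd : 0 < d)
    (C : Matrix (Fin d) (Fin d) ℝ) (hC : C.PosDef)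
    (μ : Measure (EuclideanSpace ℝ (Fin d))) [IsProbabilityMeasure μ]
    (t : ℝ) (ht : 0 ≤ t) :
    KLdiv
        (Measure.map
          (fun p : EuclideanSpace ℝ (Fin d) × EuclideanSpace ℝ (Fin d) =>
            Real.exp (-t / 2) • p.1 + Real.sqrt (1 - Real.exp (-t)) • p.2)
          (μ.prod (gaussianM C)))
        (gaussianM C)
      ≤ ENNReal.ofReal (Real.exp (-t / 2)) * KLdiv μ (gaussianM C) := by
  have exp_le : Real.exp (-t) ≤ Real.exp (-t / 2) := Real.exp_le_exp.2 (by linarith)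
  rw [gaussianM_eq_multivariateGaussian hC]
  exact (kl_decay_ou_general integral_id_multivariateGaussian μ ht).trans (by gcongr)
end
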